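/- Let β > 0, γ ∈ (0,1), ε > 0 and α ≥ 1/γ. Then there exists C > 0 such that, with probability tending to 1 as N → ∞, the Simplified Norros–Reittu graph G_N satisfies max over vertices v ∈ [N] with v ≥ εN·log^{−α} N of d(v) ≤ C·log^{αγ} N, where d(v) denotes the degree of v. -/

import Mathlib

open scoped Classical
open Filter

noncomputable section

/-- Edge probability of the Simplified Norros–Reittu graph between (1-based) vertices
`i` and `j` of `[N]`: `1 - exp(-β N^(2γ-1) i^(-γ) j^(-γ))`. -/
def snrEdgeProb (β γ : ℝ) (N i j : ℕ) : ℝ :=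
  1 - Real.exp (-(β * (N : ℝ) ^ (2 * γ - 1) * (i : ℝ) ^ (-γ) * (j : ℝ) ^ (-γ)))

/-- Probability weight of a given simple graph on `[N]` when each edge `{i,j}` (`i ≠ j`)
is present independently with probability `p i j` (indices 1-based). -/
def graphWeight (p : ℕ → ℕ → ℝ) (N : ℕ) (G : SimpleGraph (Fin N)) : ℝ :=
  ∏ i : Fin N, ∏ j : Fin N,
    if i < j then
      (if G.Adj i j then p ((i : ℕ) + 1) ((j : ℕ) + 1)
       else 1 - p ((i : ℕ) + 1) ((j : ℕ) + 1))
    else 1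

/-- Probability that the random graph with independent edge probabilities `p` satisfies the
property `A`. -/
def graphProb (p : ℕ → ℕ → ℝ) (N : ℕ) (A : SimpleGraph (Fin N) → Prop) : ℝ :=
  ∑ G : SimpleGraph (Fin N), if A G then graphWeight p N G else 0

/-- Probability that the Simplified Norros–Reittu graph `G_N` satisfies the property `A`. -/
def snrProb (β γ : ℝ) (N : ℕ) (A : SimpleGraph (Fin N) → Prop) : ℝ :=
  graphProb (snrEdgeProb β γ N) N A

def pairSet (N : ℕ) : Finset (Fin N × Fin N) := Finset.univ.filter (fun e => e.1 < e.2)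

lemma prod_pairSet (N : ℕ) (f : Fin N → Fin N → ℝ) :
    (∏ i : Fin N, ∏ j : Fin N, if i < j then f i j else 1) = ∏ e ∈ pairSet N, f e.1 e.2 := by
  rw [pairSet, Finset.prod_filter, ← Finset.univ_product_univ, Finset.prod_product]

lemma sum_graph_prod (N : ℕ) (a b : Fin N × Fin N → ℝ) :
    (∑ G : SimpleGraph (Fin N), ∏ e ∈ pairSet N, if G.Adj e.1 e.2 then a e else b e)
      = ∏ e ∈ pairSet N, (a e + b e) := by
  rw [Finset.prod_add]
  refine Finset.sum_bij' (fun G _ => (pairSet N).filter (fun e => G.Adj e.1 e.2))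
    (fun T _ => SimpleGraph.fromRel (fun i j => (i, j) ∈ T)) ?_ ?_ ?_ ?_ ?_
  · intro G _; simp
  · intro T _; simp
  · intro G _
    ext i j
    simp only [SimpleGraph.fromRel_adj, pairSet, Finset.mem_filter, Finset.mem_univ, true_and]
    constructor
    · rintro ⟨_, h | h⟩
      · exact h.2
      · exact h.2.symm
    · intro h
      refine ⟨h.ne, ?_⟩
      rcases lt_or_gt_of_ne h.ne with h1 | h1
      · exact Or.inl ⟨h1, h⟩
      · exact Or.inr ⟨h1, h.symm⟩
  · intro T hT
    rw [Finset.mem_powerset] at hT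
    ext ⟨i, j⟩
    simp only [SimpleGraph.fromRel_adj, Finset.mem_filter]
    constructor
    · rintro ⟨h0, h1, h | h⟩
      · exact h
      · have h2 := hT h
        simp only [pairSet, Finset.mem_filter, Finset.mem_univ, true_and] at h0 h2
        exact absurd h0 (lt_asymm h2)
    · intro h
      have h2 := hT h
      refine ⟨h2, ?_, Or.inl h⟩
      simp only [pairSet, Finset.mem_filter, Finset.mem_univ, true_and] at h2
      exact h2.ne
  · intro G _
    rw [Finset.prod_ite, ← Finset.filter_not]

lemma sum_pair_vertex (N : ℕ) (v : Fin N) (g : Fin N × Fin N → ℝ) :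
    (∑ e ∈ (pairSet N).filter (fun e => e.1 = v ∨ e.2 = v), g e)
      = ∑ j ∈ Finset.univ.erase v, g (min v j, max v j) := by
  symm
  refine Finset.sum_bij' (fun j _ => (min v j, max v j))
    (fun e _ => if e.1 = v then e.2 else e.1) ?_ ?_ ?_ ?_ ?_
  · intro j hj
    have hj : j ≠ v := by simpa using hj
    rcases lt_or_gt_of_ne hj with h | h <;>
    simp [pairSet, h.le, h]
  · rintro ⟨i, j⟩ he
    simp only [pairSet, Finset.mem_filter, Finset.mem_univ, true_and] at he
    by_cases h : i = v
    · subst h; simpa using he.1.ne'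
    · simp [h]
  · intro j hj
    have hj : j ≠ v := by simpa using hj
    rcases lt_or_gt_of_ne hj with h | h
    · simp [h.le, h.ne]
    · simp [h.le]
  · rintro ⟨i, j⟩ he
    simp only [pairSet, Finset.mem_filter, Finset.mem_univ, true_and] at he
    by_cases h : i = v
    · subst h; simp [he.1.le]
    · have : j = v := by tauto
      subst this; simp [h, he.1.le]
  · intros; rfl

lemma graphWeight_eq (p : ℕ → ℕ → ℝ) (N : ℕ) (G : SimpleGraph (Fin N)) :
    graphWeight p N G = ∏ e ∈ pairSet N, if G.Adj e.1 e.2 then p ((e.1 : ℕ) + 1) ((e.2 : ℕ) + 1)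
      else 1 - p ((e.1 : ℕ) + 1) ((e.2 : ℕ) + 1) := by
  unfold graphWeight
  exact prod_pairSet N (fun i j => if G.Adj i j then p ((i : ℕ) + 1) ((j : ℕ) + 1)
      else 1 - p ((i : ℕ) + 1) ((j : ℕ) + 1))

lemma sum_graphWeight (p : ℕ → ℕ → ℝ) (N : ℕ) :
    (∑ G : SimpleGraph (Fin N), graphWeight p N G) = 1 := by
  simp_rw [graphWeight_eq]
  rw [sum_graph_prod N (fun e => p ((e.1 : ℕ) + 1) ((e.2 : ℕ) + 1))
    (fun e => 1 - p ((e.1 : ℕ) + 1) ((e.2 : ℕ) + 1))]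
  simp

lemma graphWeight_nonneg (p : ℕ → ℕ → ℝ) (hp : ∀ i j, 0 ≤ p i j ∧ p i j ≤ 1) (N : ℕ)
    (G : SimpleGraph (Fin N)) : 0 ≤ graphWeight p N G := by
  rw [graphWeight_eq]
  refine Finset.prod_nonneg fun e _ => ?_
  split_ifs
  · exact (hp _ _).1
  · linarith [(hp ((e.1 : ℕ) + 1) ((e.2 : ℕ) + 1)).2]

lemma degree_eq_sum (N : ℕ) (v : Fin N) (G : SimpleGraph (Fin N)) :
    (G.degree v : ℝ) = ∑ e ∈ (pairSet N).filter (fun e => e.1 = v ∨ e.2 = v),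
      if G.Adj e.1 e.2 then (1 : ℝ) else 0 := by
  rw [sum_pair_vertex N v (fun e => if G.Adj e.1 e.2 then (1 : ℝ) else 0)]
  have h1 : ∀ j, G.Adj (min v j) (max v j) ↔ G.Adj v j := by
    intro j
    rcases le_total v j with h | h
    · simp [h]
    · simp [h, G.adj_comm]
  simp only [h1]
  rw [Finset.sum_boole, ← SimpleGraph.card_neighborFinset_eq_degree]
  congr 2
  ext j
  simp only [SimpleGraph.mem_neighborFinset, Finset.mem_filter, Finset.mem_erase, Finset.mem_univ,
    and_true]
  exact ⟨fun h => ⟨h.ne', h⟩, fun h => h.2⟩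

lemma exp_degree_weight (p : ℕ → ℕ → ℝ) (N : ℕ) (v : Fin N) (G : SimpleGraph (Fin N)) :
    Real.exp (G.degree v) * graphWeight p N G = ∏ e ∈ pairSet N, if G.Adj e.1 e.2 then
      (if e.1 = v ∨ e.2 = v then Real.exp 1 else 1) * p ((e.1 : ℕ) + 1) ((e.2 : ℕ) + 1)
      else 1 - p ((e.1 : ℕ) + 1) ((e.2 : ℕ) + 1) := by
  rw [degree_eq_sum, Real.exp_sum, graphWeight_eq, Finset.prod_filter, ← Finset.prod_mul_distrib]
  refine Finset.prod_congr rfl fun e _ => ?_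
  split_ifs <;> simp

lemma exp_moment (p : ℕ → ℕ → ℝ) (hp : ∀ i j, 0 ≤ p i j ∧ p i j ≤ 1)
    (hs : ∀ i j, p i j = p j i) (N : ℕ) (v : Fin N) :
    (∑ G : SimpleGraph (Fin N), Real.exp (G.degree v) * graphWeight p N G)
      ≤ Real.exp (2 * ∑ j : Fin N, p ((v : ℕ) + 1) ((j : ℕ) + 1)) := by
  simp_rw [exp_degree_weight]
  rw [sum_graph_prod N (fun e => (if e.1 = v ∨ e.2 = v then Real.exp 1 else 1) *
    p ((e.1 : ℕ) + 1) ((e.2 : ℕ) + 1)) (fun e => 1 - p ((e.1 : ℕ) + 1) ((e.2 : ℕ) + 1))]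
  have h1 : ∀ e ∈ pairSet N, (if e.1 = v ∨ e.2 = v then Real.exp 1 else 1) *
      p ((e.1 : ℕ) + 1) ((e.2 : ℕ) + 1) + (1 - p ((e.1 : ℕ) + 1) ((e.2 : ℕ) + 1))
      ≤ Real.exp (if e.1 = v ∨ e.2 = v then 2 * p ((e.1 : ℕ) + 1) ((e.2 : ℕ) + 1) else 0) := by
    intro e _
    have := hp ((e.1 : ℕ) + 1) ((e.2 : ℕ) + 1)
    split_ifs
    · have h2 := Real.add_one_le_exp (2 * p ((e.1 : ℕ) + 1) ((e.2 : ℕ) + 1))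
      have h3 := Real.exp_one_lt_d9
      nlinarith [this.1]
    · simp
  refine (Finset.prod_le_prod ?_ h1).trans ?_
  · intro e _
    have := hp ((e.1 : ℕ) + 1) ((e.2 : ℕ) + 1)
    have h3 := Real.exp_pos 1
    refine add_nonneg (mul_nonneg ?_ this.1) (by linarith)
    split_ifs <;> positivity
  · rw [← Real.exp_sum, Real.exp_le_exp, ← Finset.sum_filter,
      sum_pair_vertex N v (fun e => 2 * p ((e.1 : ℕ) + 1) ((e.2 : ℕ) + 1)), Finset.mul_sum]
    refine (Finset.sum_le_sum (g := fun j : Fin N => 2 * p ((v : ℕ) + 1) ((j : ℕ) + 1)) ?_).trans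
      (Finset.sum_le_sum_of_subset_of_nonneg (Finset.subset_univ _) ?_)
    · intro j _
      rcases le_total v j with h | h
      · simp [h]
      · simp only [h, min_eq_right, max_eq_left]; rw [hs]
    · intro j _ _
      linarith [(hp ((v : ℕ) + 1) ((j : ℕ) + 1)).1]

lemma sum_rpow_le (γ : ℝ) (hγ : γ ∈ Set.Ioo (0 : ℝ) 1) (N : ℕ) :
    (∑ j ∈ Finset.range N, ((j + 1 : ℕ) : ℝ) ^ (-γ)) ≤ (N : ℝ) ^ (1 - γ) / (1 - γ) := by
  obtain ⟨h0, h1⟩ := hγ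
  have h1' : 0 < 1 - γ := by linarith
  induction N with
  | zero => simp [Real.zero_rpow h1'.ne']
  | succ n ih =>
    rw [Finset.sum_range_succ]
    have hx : (0 : ℝ) < ((n + 1 : ℕ) : ℝ) := by positivity
    have hb := rpow_one_add_le_one_add_mul_self (s := -(1 / ((n + 1 : ℕ) : ℝ))) (p := 1 - γ)
      (by
        rw [neg_le_neg_iff, div_le_one hx]; push_cast; linarith [(Nat.cast_nonneg n : (0 : ℝ) ≤ n)])
      h1'.le (by linarith)
    have e1 : 1 + -(1 / ((n + 1 : ℕ) : ℝ)) = (n : ℝ) / ((n + 1 : ℕ) : ℝ) := by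
      field_simp; push_cast; ring
    rw [e1, Real.div_rpow (Nat.cast_nonneg n) hx.le] at hb
    have hX : (0 : ℝ) < ((n + 1 : ℕ) : ℝ) ^ (1 - γ) := Real.rpow_pos_of_pos hx _
    rw [div_le_iff₀ hX] at hb
    have e2 : ((n + 1 : ℕ) : ℝ) ^ (-γ) = ((n + 1 : ℕ) : ℝ) ^ (1 - γ) / ((n + 1 : ℕ) : ℝ) := by
      rw [← Real.rpow_sub_one hx.ne']; congr 1; ring
    rw [e2]
    have e3 : (1 + (1 - γ) * -(1 / ((n + 1 : ℕ) : ℝ))) * ((n + 1 : ℕ) : ℝ) ^ (1 - γ)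
      = ((n + 1 : ℕ) : ℝ) ^ (1 - γ)
        - (1 - γ) * (((n + 1 : ℕ) : ℝ) ^ (1 - γ) / ((n + 1 : ℕ) : ℝ)) := by ring
    rw [e3] at hb
    rw [le_div_iff₀ h1'] at ih ⊢
    nlinarith

lemma snr_mean_bound (β γ ε α : ℝ) (hβ : 0 < β) (hγ : γ ∈ Set.Ioo (0 : ℝ) 1) (hε : 0 < ε)
    (N : ℕ) (hN : 3 ≤ N) (v : Fin N)
    (hv : ε * (N : ℝ) * Real.log N ^ (-α) ≤ ((v : ℕ) + 1 : ℝ)) :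
    (∑ j : Fin N, snrEdgeProb β γ N ((v : ℕ) + 1) ((j : ℕ) + 1))
      ≤ β / (1 - γ) * ε ^ (-γ) * Real.log N ^ (α * γ) := by
  have h1' : 0 < 1 - γ := by linarith [hγ.2]
  have hNp : (0 : ℝ) < N := by positivity
  have hL : 0 < Real.log N := Real.log_pos (by exact_mod_cast (by omega : 1 < N))
  have hvp : (0 : ℝ) < ε * (N : ℝ) * Real.log N ^ (-α) := by positivity
  have a1 : ((v : ℕ) + 1 : ℝ) ^ (-γ) ≤ ε ^ (-γ) * (N : ℝ) ^ (-γ) * Real.log N ^ (α * γ) := by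
    refine (Real.rpow_le_rpow_of_nonpos hvp hv (by linarith [hγ.1])).trans (le_of_eq ?_)
    rw [Real.mul_rpow (by positivity) (by positivity), Real.mul_rpow hε.le hNp.le,
      ← Real.rpow_mul hL.le]
    congr 2; ring
  have a2 := sum_rpow_le γ hγ N
  calc _ ≤ ∑ j : Fin N, β * (N : ℝ) ^ (2 * γ - 1) * ((v : ℕ) + 1 : ℝ) ^ (-γ) *
        (((j : ℕ) + 1 : ℕ) : ℝ) ^ (-γ) := by
        refine Finset.sum_le_sum fun j _ => ?_
        unfold snrEdgeProb
        have := Real.add_one_le_exp (-(β * (N : ℝ) ^ (2 * γ - 1) * (((v : ℕ) + 1 : ℕ) : ℝ) ^ (-γ) *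
          (((j : ℕ) + 1 : ℕ) : ℝ) ^ (-γ)))
        push_cast at this ⊢
        linarith
    _ = β * (N : ℝ) ^ (2 * γ - 1) * ((v : ℕ) + 1 : ℝ) ^ (-γ) *
        ∑ j ∈ Finset.range N, ((j + 1 : ℕ) : ℝ) ^ (-γ) := by
        rw [← Finset.mul_sum, Finset.sum_range (fun j : ℕ => ((j + 1 : ℕ) : ℝ) ^ (-γ))]
    _ ≤ β * (N : ℝ) ^ (2 * γ - 1) * (ε ^ (-γ) * (N : ℝ) ^ (-γ) * Real.log N ^ (α * γ)) *
        ((N : ℝ) ^ (1 - γ) / (1 - γ)) := by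
        gcongr
    _ = β / (1 - γ) * ε ^ (-γ) * Real.log N ^ (α * γ) *
        ((N : ℝ) ^ (2 * γ - 1) * (N : ℝ) ^ (-γ) * (N : ℝ) ^ (1 - γ)) := by ring
    _ = _ := by
        rw [← Real.rpow_add hNp, ← Real.rpow_add hNp]
        have : 2 * γ - 1 + -γ + (1 - γ) = 0 := by ring
        rw [this, Real.rpow_zero, mul_one]

lemma snrEdgeProb_mem (β γ : ℝ) (hβ : 0 < β) (N i j : ℕ) :
    0 ≤ snrEdgeProb β γ N i j ∧ snrEdgeProb β γ N i j ≤ 1 := by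
  unfold snrEdgeProb
  constructor
  · rw [sub_nonneg, Real.exp_le_one_iff, neg_nonpos]
    positivity
  · linarith [Real.exp_pos (-(β * (N : ℝ) ^ (2 * γ - 1) * (i : ℝ) ^ (-γ) * (j : ℝ) ^ (-γ)))]

lemma snrEdgeProb_symm (β γ : ℝ) (N i j : ℕ) :
    snrEdgeProb β γ N i j = snrEdgeProb β γ N j i := by
  unfold snrEdgeProb
  rw [mul_right_comm]

lemma graphProb_degree_lower (p : ℕ → ℕ → ℝ) (hp : ∀ i j, 0 ≤ p i j ∧ p i j ≤ 1)
    (hs : ∀ i j, p i j = p j i) (N : ℕ) (S : Fin N → Prop) (D M δ : ℝ)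
    (hM : ∀ v, S v → ∑ j : Fin N, p ((v : ℕ) + 1) ((j : ℕ) + 1) ≤ M)
    (hδ : Real.exp (2 * M - D) ≤ δ) :
    1 - N * δ ≤ graphProb p N (fun G => ∀ v, S v → (G.degree v : ℝ) ≤ D) := by
  have hδ0 : 0 ≤ δ := (Real.exp_pos _).le.trans hδ
  have key : ∀ G : SimpleGraph (Fin N), graphWeight p N G
      - (∑ v : Fin N, if S v then Real.exp (-D) * (Real.exp (G.degree v) * graphWeight p N G) else 0)
      ≤ if (∀ v, S v → (G.degree v : ℝ) ≤ D) then graphWeight p N G else 0 := by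
    intro G
    have hw := graphWeight_nonneg p hp N G
    have hnn : ∀ v ∈ Finset.univ, 0 ≤ (if S v then
        Real.exp (-D) * (Real.exp (G.degree v) * graphWeight p N G) else 0) := by
      intro v _
      split_ifs <;> positivity
    split_ifs with h
    · linarith [Finset.sum_nonneg hnn]
    · push Not at h
      obtain ⟨v, hv, hd⟩ := h
      have h1 := Finset.single_le_sum hnn (Finset.mem_univ v)
      rw [if_pos hv, ← mul_assoc, ← Real.exp_add] at h1
      have h2 : 1 ≤ Real.exp (-D + G.degree v) := Real.one_le_exp (by linarith)
      nlinarith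
  have hsum := Finset.sum_le_sum (fun G (_ : G ∈ Finset.univ) => key G)
  rw [Finset.sum_sub_distrib, sum_graphWeight, Finset.sum_comm] at hsum
  have hb : (∑ v : Fin N, ∑ G : SimpleGraph (Fin N), if S v then
      Real.exp (-D) * (Real.exp (G.degree v) * graphWeight p N G) else 0) ≤ N * δ := by
    have : ∀ v ∈ (Finset.univ : Finset (Fin N)), (∑ G : SimpleGraph (Fin N), if S v then
      Real.exp (-D) * (Real.exp (G.degree v) * graphWeight p N G) else 0) ≤ δ := by
      intro v _
      by_cases hv : S v
      · simp only [hv, if_true]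
        rw [← Finset.mul_sum]
        have h1 := exp_moment p hp hs N v
        have h2 := hM v hv
        calc _ ≤ Real.exp (-D) * Real.exp (2 * M) := by
              gcongr
              exact h1.trans (Real.exp_le_exp.2 (by linarith))
          _ = Real.exp (2 * M - D) := by rw [← Real.exp_add]; congr 1; ring
          _ ≤ δ := hδ
      · simpa [hv] using hδ0
    simpa using Finset.sum_le_sum this
  refine le_trans (by linarith) (hsum.trans (le_of_eq ?_))
  unfold graphProb
  refine Finset.sum_congr rfl fun G _ => ?_
  congr

lemma graphProb_le_one (p : ℕ → ℕ → ℝ) (hp : ∀ i j, 0 ≤ p i j ∧ p i j ≤ 1) (N : ℕ)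
    (A : SimpleGraph (Fin N) → Prop) : graphProb p N A ≤ 1 := by
  rw [← sum_graphWeight p N]
  refine Finset.sum_le_sum fun G _ => ?_
  have := graphWeight_nonneg p hp N G
  split_ifs <;> linarith

/-- For `β > 0`, `γ ∈ (0,1)`, `ε > 0` and `α ≥ 1/γ`, there is `C > 0` such
that with probability tending to `1` as `N → ∞`, every vertex `v` of `G_N` with (1-based)
index at least `εN log^{−α} N` has degree at most `C log^{αγ} N`. -/
theorem snr_low_weight_degree_bound
    (β γ ε α : ℝ) (hβ : 0 < β) (hγ : γ ∈ Set.Ioo (0 : ℝ) 1) (hε : 0 < ε)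
    (hα : 1 / γ ≤ α) :
    ∃ C > (0 : ℝ),
      Tendsto
        (fun N : ℕ =>
          snrProb β γ N (fun G =>
            ∀ v : Fin N, ε * (N : ℝ) * Real.log N ^ (-α) ≤ ((v : ℕ) + 1 : ℝ) →
              (G.degree v : ℝ) ≤ C * Real.log N ^ (α * γ)))
        atTop (nhds 1) := by
  have h1' : 0 < 1 - γ := by linarith [hγ.2]
  set K := β / (1 - γ) * ε ^ (-γ) with hK
  have hK0 : 0 < K := by positivity
  refine ⟨2 * K + 2, by positivity, ?_⟩
  have hlim : Tendsto (fun N : ℕ => 1 - ((N : ℝ))⁻¹) atTop (nhds 1) := by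
    simpa using (tendsto_const_nhds (x := (1 : ℝ))).sub (tendsto_inv_atTop_nhds_zero_nat (𝕜 := ℝ))
  refine tendsto_of_tendsto_of_tendsto_of_le_of_le' hlim tendsto_const_nhds ?_
    (Eventually.of_forall fun N => graphProb_le_one _ (snrEdgeProb_mem β γ hβ N) N _)
  filter_upwards [eventually_ge_atTop 3] with N hN
  have hNp : (0 : ℝ) < N := by positivity
  have hL : 1 ≤ Real.log N := by
    rw [Real.le_log_iff_exp_le hNp]
    have : (3 : ℝ) ≤ N := by exact_mod_cast hN
    linarith [Real.exp_one_lt_d9]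
  have hαγ : 1 ≤ α * γ := by
    rwa [div_le_iff₀ hγ.1] at hα
  have hLL : Real.log N ≤ Real.log N ^ (α * γ) := by
    simpa using Real.rpow_le_rpow_of_exponent_le hL hαγ
  have := graphProb_degree_lower (snrEdgeProb β γ N) (snrEdgeProb_mem β γ hβ N)
    (snrEdgeProb_symm β γ N) N (fun v => ε * (N : ℝ) * Real.log N ^ (-α) ≤ ((v : ℕ) + 1 : ℝ))
    ((2 * K + 2) * Real.log N ^ (α * γ)) (K * Real.log N ^ (α * γ)) ((N : ℝ)⁻¹ * (N : ℝ)⁻¹)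
    (fun v hv => snr_mean_bound β γ ε α hβ hγ hε N hN v hv)
    (by
      have e : (N : ℝ)⁻¹ * (N : ℝ)⁻¹ = Real.exp (-Real.log N + -Real.log N) := by
        rw [Real.exp_add, Real.exp_neg, Real.exp_log hNp]
      rw [e, Real.exp_le_exp]
      linarith)
  rw [← mul_assoc, mul_inv_cancel₀ hNp.ne', one_mul] at this
  exact this
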